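/- Let 𝕏 be a σ-finite measure space, ℳ a Banach L^0(𝕏)-module, and I a nonempty index set. The unique linear continuous operator 𝔦 : L^0(𝕏;ℓ₁(I)) ⊗̂_π ℳ → ℓ₁(I,ℳ) satisfying 𝔦(a ⊗ v) = (a(·)_i · v)_{i∈I} for every a ∈ L^0(𝕏;ℓ₁(I)) and v ∈ ℳ is an isomorphism of Banach L^0(𝕏)-modules. -/

import Mathlib

/-!
The distance of a Banach `L⁰`-module is a complete group norm (`nrm`), not homogeneous, for which
every map with a bound `|T v| ≤ g |v|` is continuous (`continuous_of_bdd`). A family whose pointwise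
norms have order-bounded finite sums is summable for it (`summable_of_bdd`): multiplied by
the invertible weight `1 / (1 + |b|)`, with `b` the order bound, it becomes absolutely summable.
This works for index sets of any cardinality.

For each `i` the map `a ⊗ v ↦ a(·)_i v` on the algebraic tensor product satisfies
`∑_{i ∈ F} |·| ≤ |·|_π` for finite `F`, because `∑_{i ∈ F} |a(·)_i| ≤ |a|`. Hence it extends by
density to the projective tensor product, giving the coordinates `J i` of `𝔦`, still with
`∑_{i ∈ F} |J i p| ≤ |p|`.

The reverse inequality and injectivity follow from the reconstruction `p = ∑ i, δ_i ⊗ J i p`, where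
`δ_i` is the constant `i`-th unit vector (`exists_coords`). On elementary tensors it is the
expansion `a = ∑ i, a(·)_i δ_i` (`hasSum_coord`). There the series converges, and its sum equals `a`
since an element of `L⁰(𝕏;ℓ₁(I))` is determined by its coordinates: its range is separable, so all
but countably many coordinates vanish identically (`eq_zero_of_coord`). The general case follows by
density, as `p ↦ ∑_{i ∈ F} δ_i ⊗ J i p` is a contraction. Since `|δ_i ⊗ v| ≤ |v|`, the
reconstruction bounds `|p|` by any upper bound of the sums `∑_{i ∈ F} |J i p|`. Conversely, for `g`
in `ℓ₁(I, ℳ)` the series `∑ i, δ_i ⊗ g i` converges to a preimage of `g`. Uniqueness is density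
once more.
-/

open MeasureTheory Filter Set TensorProduct

noncomputable section

namespace Paper

variable {X : Type*} [MeasurableSpace X]

/-- The space `L⁰(𝕏)` of real-valued measurable functions up to `μ`-a.e. equality. -/
abbrev L0 (μ : Measure X) : Type _ := X →ₘ[μ] ℝ

instance (μ : Measure X) : CommRing (L0 μ) :=
  { (inferInstance : AddCommGroup (L0 μ)), (inferInstance : CommMonoid (L0 μ)) with
    left_distrib := fun a b c => AEEqFun.toGerm_injective <| by
      simp only [AEEqFun.mul_toGerm, AEEqFun.add_toGerm, mul_add]
    right_distrib := fun a b c => AEEqFun.toGerm_injective <| by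
      simp only [AEEqFun.mul_toGerm, AEEqFun.add_toGerm, add_mul]
    zero_mul := fun a => AEEqFun.toGerm_injective <| by
      simp only [AEEqFun.mul_toGerm, AEEqFun.zero_toGerm, zero_mul]
    mul_zero := fun a => AEEqFun.toGerm_injective <| by
      simp only [AEEqFun.mul_toGerm, AEEqFun.zero_toGerm, mul_zero] }

/-- The distance on `L⁰(𝕏)` inducing the topology of convergence in measure, defined through
the auxiliary finite measure `μ.toFinite` (which satisfies `μ ≪ μ.toFinite ≪ μ`). -/
noncomputable def dL0 (μ : Measure X) [SFinite μ] (f g : L0 μ) : ℝ :=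
  ∫ x, min |f x - g x| 1 ∂(μ.toFinite)

/-- A Banach `L⁰(𝕏)`-module: a module over `L⁰(𝕏)` endowed with a pointwise norm, complete
with respect to the induced distance. -/
class BanachMod (μ : Measure X) [SFinite μ] (M : Type*) [AddCommGroup M]
    [Module (L0 μ) M] where
  pn : M → L0 μ
  pn_nonneg : ∀ v : M, 0 ≤ pn v
  pn_eq_zero : ∀ v : M, pn v = 0 ↔ v = 0
  pn_add_le : ∀ v w : M, pn (v + w) ≤ pn v + pn w
  pn_smul : ∀ (f : L0 μ) (v : M), pn (f • v) = |f| * pn v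
  complete : ∀ u : ℕ → M,
    (∀ ε : ℝ, 0 < ε → ∃ N : ℕ, ∀ m ≥ N, ∀ n ≥ N, dL0 μ (pn (u m - u n)) 0 < ε) →
    ∃ v : M, Tendsto (fun n => dL0 μ (pn (u n - v)) 0) atTop (nhds 0)

/-- The pointwise norm of a Banach `L⁰(𝕏)`-module, with the measure explicit. -/
noncomputable def pn (μ : Measure X) [SFinite μ] {M : Type*} [AddCommGroup M]
    [Module (L0 μ) M] [BanachMod μ M] (v : M) : L0 μ :=
  BanachMod.pn v

/-- The distance on a Banach `L⁰(𝕏)`-module. -/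
noncomputable def dM (μ : Measure X) [SFinite μ] {M : Type*} [AddCommGroup M]
    [Module (L0 μ) M] [BanachMod μ M] (v w : M) : ℝ :=
  dL0 μ (pn μ (v - w)) 0

section Defs

variable (μ : Measure X) [SFinite μ]
variable {M N : Type*} [AddCommGroup M] [Module (L0 μ) M] [BanachMod μ M]
  [AddCommGroup N] [Module (L0 μ) N] [BanachMod μ N]

/-- The set of admissible bounds of a map between Banach `L⁰(𝕏)`-modules; the pointwise norm
`|T|` of a homomorphism is the infimum of this set. -/
def homBddSet (T : M → N) : Set (L0 μ) :=
  {g | 0 ≤ g ∧ ∀ v, pn μ (T v) ≤ g * pn μ v}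

/-- A homomorphism of Banach `L⁰(𝕏)`-modules: an `L⁰(𝕏)`-linear map admitting a bound
`g ∈ L⁰(𝕏)⁺` with `|T v| ≤ g |v|` (equivalently, `L⁰(𝕏)`-linear and continuous). -/
def IsHom (T : M →ₗ[L0 μ] N) : Prop :=
  ∃ g, g ∈ homBddSet μ (⇑T)

/-- The set of admissible bounds of an `L⁰(𝕏)`-valued map (for elements of the dual module). -/
def dualBddSet (ω : M → L0 μ) : Set (L0 μ) :=
  {g | 0 ≤ g ∧ ∀ v, |ω v| ≤ g * pn μ v}

/-- Membership in the dual module `ℳ*`: an `L⁰(𝕏)`-linear map `ω : ℳ → L⁰(𝕏)` admitting a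
bound `g ∈ L⁰(𝕏)⁺` with `|ω v| ≤ g |v|`. -/
def IsDual (ω : M →ₗ[L0 μ] L0 μ) : Prop :=
  ∃ g, g ∈ dualBddSet μ (⇑ω)

/-- Membership in the unit disc `𝔻_{ℳ*}` of the dual module: `|ω| ≤ 1`, equivalently
`|ω v| ≤ |v|` for every `v`. -/
def InDualDisc (ω : M →ₗ[L0 μ] L0 μ) : Prop :=
  ∀ v, |ω v| ≤ pn μ v

/-- The family of pointwise norms `|s - ∑_{i ∈ F ∪ G} v i|` for `G` finite disjoint from `F`,
whose `F`-indexed inf-sup being `0` defines `s = ∑_{i∈I} v i`. -/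
def sumUB {I : Type*} (v : I → M) (s : M) (F : Finset I) : Set (L0 μ) :=
  {g | ∃ G : Finset I, Disjoint G F ∧ g = pn μ (s - (∑ i ∈ F, v i + ∑ i ∈ G, v i))}

/-- `HasSumMod μ v s` means that the family `{v_i}` is summable in the Banach `L⁰(𝕏)`-module
with sum `s`, i.e. `⋀_F ⋁_G |s - ∑_{i ∈ F ∪ G} v_i| = 0` (the inner suprema being the values
of `b`, and the outer infimum being `0`). -/
def HasSumMod {I : Type*} (v : I → M) (s : M) : Prop :=
  ∃ b : Finset I → L0 μ, (∀ F, IsLUB (sumUB μ v s F) (b F)) ∧ IsGLB (Set.range b) 0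

/-- A family in a Banach `L⁰(𝕏)`-module is summable if it has a sum. -/
def SummableMod {I : Type*} (v : I → M) : Prop :=
  ∃ s, HasSumMod μ v s

/-- The partial sums `∑_{i ∈ F} |v i|` of the pointwise norms of a family; the element `|v|₁`
of `ℓ₁(I, ℳ)` is the supremum of this set. -/
def l1PartialSums {I : Type*} (v : I → M) : Set (L0 μ) :=
  {g | ∃ F : Finset I, g = ∑ i ∈ F, pn μ (v i)}

/-- Membership in `ℓ₁(I, ℳ)`: the partial sums of the pointwise norms admit a supremum
(equivalently, an upper bound) in `L⁰(𝕏)`. -/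
def Meml1 {I : Type*} (v : I → M) : Prop :=
  ∃ b, IsLUB (l1PartialSums μ v) b

/-- The partial sums `∑_{i ∈ F} |v i|` for an `L⁰(𝕏)`-valued family. -/
def l1PartialSumsF {I : Type*} (v : I → L0 μ) : Set (L0 μ) :=
  {g | ∃ F : Finset I, g = ∑ i ∈ F, |v i|}

/-- Membership in `ℓ₁(I, L⁰(𝕏))`. -/
def Meml1F {I : Type*} (v : I → L0 μ) : Prop :=
  ∃ b, IsLUB (l1PartialSumsF μ v) b

/-- The set whose infimum defines the projective pointwise norm: all values
`∑_{i=1}^n |v_i||w_i|` over representations `α = ∑_{i=1}^n v_i ⊗ w_i`. -/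
def piReps (α : M ⊗[L0 μ] N) : Set (L0 μ) :=
  {g | ∃ (n : ℕ) (v : Fin n → M) (w : Fin n → N),
    α = ∑ i, v i ⊗ₜ[L0 μ] w i ∧ g = ∑ i, pn μ (v i) * pn μ (w i)}

/-- The set whose supremum defines the injective pointwise norm: all values
`|∑_{i=1}^n ω(v_i) η(w_i)|` over representations `α = ∑_{i=1}^n v_i ⊗ w_i` and elements
`ω ∈ 𝔻_{ℳ*}`, `η ∈ 𝔻_{𝒩*}`. -/
def epsReps (α : M ⊗[L0 μ] N) : Set (L0 μ) :=
  {g | ∃ (n : ℕ) (v : Fin n → M) (w : Fin n → N)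
    (ω : M →ₗ[L0 μ] L0 μ) (η : N →ₗ[L0 μ] L0 μ), InDualDisc μ ω ∧ InDualDisc μ η ∧
    α = ∑ i, v i ⊗ₜ[L0 μ] w i ∧ g = |∑ i, ω (v i) * η (w i)|}

/-- `IsPiTensor μ M N P e` states that the Banach `L⁰(𝕏)`-module `P`, together with the
`L⁰(𝕏)`-linear map `e` defined on the algebraic tensor product, realizes the projective
tensor product `ℳ ⊗̂_π 𝒩`: the pointwise norm of `e α` is the projective pointwise norm
`|α|_π` and the image of `e` is dense. -/
structure IsPiTensor (M N P : Type*) [AddCommGroup M] [Module (L0 μ) M] [BanachMod μ M]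
    [AddCommGroup N] [Module (L0 μ) N] [BanachMod μ N]
    [AddCommGroup P] [Module (L0 μ) P] [BanachMod μ P]
    (e : M ⊗[L0 μ] N →ₗ[L0 μ] P) : Prop where
  pn_emb : ∀ α : M ⊗[L0 μ] N, IsGLB (piReps μ α) (pn μ (e α))
  dense : ∀ p : P, ∀ ε : ℝ, 0 < ε → ∃ α : M ⊗[L0 μ] N, dM μ (e α) p < ε

/-- `IsEpsTensor μ M N P e` states that the Banach `L⁰(𝕏)`-module `P`, together with the
`L⁰(𝕏)`-linear map `e` defined on the algebraic tensor product, realizes the injective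
tensor product `ℳ ⊗̂_ε 𝒩`: the pointwise norm of `e α` is the injective pointwise norm
`|α|_ε` and the image of `e` is dense. -/
structure IsEpsTensor (M N P : Type*) [AddCommGroup M] [Module (L0 μ) M] [BanachMod μ M]
    [AddCommGroup N] [Module (L0 μ) N] [BanachMod μ N]
    [AddCommGroup P] [Module (L0 μ) P] [BanachMod μ P]
    (e : M ⊗[L0 μ] N →ₗ[L0 μ] P) : Prop where
  pn_emb : ∀ α : M ⊗[L0 μ] N, IsLUB (epsReps μ α) (pn μ (e α))
  dense : ∀ p : P, ∀ ε : ℝ, 0 < ε → ∃ α : M ⊗[L0 μ] N, dM μ (e α) p < ε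

end Defs

/-- A realization of the `L⁰`-Lebesgue–Bochner space `L⁰(𝕏;𝔹)` as a Banach `L⁰(𝕏)`-module:
the Banach `L⁰(𝕏)`-module `V` is identified, via the bijection `ev`, with the space
`X →ₘ[μ] B` of (classes of) measurable maps with separable range up to a.e. equality,
in such a way that the module operations are the a.e. pointwise ones and the pointwise norm
of `v` is a.e. equal to `x ↦ ‖ev v x‖`. -/
structure IsL0B (μ : Measure X) [SFinite μ] (B : Type*) [NormedAddCommGroup B]
    [NormedSpace ℝ B] (V : Type*) [AddCommGroup V] [Module (L0 μ) V] [BanachMod μ V]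
    (ev : V → (X →ₘ[μ] B)) : Prop where
  bij : Function.Bijective ev
  add : ∀ v w : V, ev (v + w) = ev v + ev w
  smul : ∀ (f : L0 μ) (v : V), ∀ᵐ x ∂μ, (ev (f • v)) x = f x • (ev v) x
  norm : ∀ v : V, ∀ᵐ x ∂μ, (pn μ v) x = ‖(ev v) x‖

/-! ### Order and metric on `L⁰` -/

section L0calc

variable {μ : Measure X}

instance instIsOrderedRingL0 : IsOrderedRing (L0 μ) where
  add_le_add_left a b h c := by
    rw [← AEEqFun.coeFn_le] at h ⊢
    filter_upwards [h, AEEqFun.coeFn_add a c, AEEqFun.coeFn_add b c] with x h1 h2 h3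
    rw [h2, h3]
    simpa using h1
  zero_le_one := by
    rw [← AEEqFun.coeFn_le]
    filter_upwards [AEEqFun.coeFn_zero (μ := μ) (β := ℝ), AEEqFun.coeFn_one (μ := μ) (β := ℝ)]
      with x h1 h2
    rw [h1, h2]
    exact zero_le_one
  mul_le_mul_of_nonneg_left c hc a b h := by
    change a ≤ b at h
    change c * a ≤ c * b
    rw [← AEEqFun.coeFn_le] at h hc ⊢
    filter_upwards [h, hc, AEEqFun.coeFn_mul c a, AEEqFun.coeFn_mul c b,
      AEEqFun.coeFn_zero (μ := μ) (β := ℝ)] with x h1 h0 h2 h3 h4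
    rw [h4] at h0
    rw [h2, h3]
    exact mul_le_mul_of_nonneg_left h1 h0
  mul_le_mul_of_nonneg_right c hc a b h := by
    change a ≤ b at h
    change a * c ≤ b * c
    rw [← AEEqFun.coeFn_le] at h hc ⊢
    filter_upwards [h, hc, AEEqFun.coeFn_mul a c, AEEqFun.coeFn_mul b c,
      AEEqFun.coeFn_zero (μ := μ) (β := ℝ)] with x h1 h0 h2 h3 h4
    rw [h4] at h0
    rw [h2, h3]
    exact mul_le_mul_of_nonneg_right h1 h0

lemma abs_apply_ae (f : L0 μ) : ∀ᵐ x ∂μ, (|f| : L0 μ) x = |f x| := AEEqFun.coeFn_abs f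

/-- The bounded weight `1 / (1 + |b|)`. Multiplying by it makes everything dominated by `b`
integrable, and it is invertible in the ring `L⁰`. -/
def wt (b : L0 μ) : L0 μ :=
  AEEqFun.comp (fun t : ℝ => (1 + |t|)⁻¹)
    (Continuous.inv₀ (by fun_prop) fun t => by positivity) b

lemma wt_apply (b : L0 μ) : ∀ᵐ x ∂μ, wt b x = (1 + |b x|)⁻¹ := AEEqFun.coeFn_comp _ _ b

lemma wt_mul (b : L0 μ) : (1 + |b|) * wt b = 1 := by
  apply AEEqFun.ext
  filter_upwards [wt_apply b, abs_apply_ae b, AEEqFun.coeFn_mul (1 + |b|) (wt b),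
    AEEqFun.coeFn_add (1 : L0 μ) |b|, AEEqFun.coeFn_one (μ := μ) (β := ℝ)] with x h1 h2 h3 h4 h5
  rw [h3, Pi.mul_apply, h4, Pi.add_apply, h1, h2, h5]
  have : (1 + |b x|) ≠ 0 := by positivity
  simp [this]

lemma wt_nonneg (b : L0 μ) : 0 ≤ wt b := by
  rw [← AEEqFun.coeFn_le]
  filter_upwards [wt_apply b, AEEqFun.coeFn_zero (μ := μ) (β := ℝ)] with x h1 h2
  rw [h1, h2]
  simp only [Pi.zero_apply]
  positivity

lemma abs_of_nonneg_L0 {f : L0 μ} (h : 0 ≤ f) : |f| = f := abs_of_nonneg h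

lemma wt_mul_le (b : L0 μ) : wt b * b ≤ 1 := by
  rw [← wt_mul b, mul_comm]
  refine mul_le_mul_of_nonneg_right ?_ (wt_nonneg b)
  calc b ≤ |b| := le_abs_self b
    _ ≤ 1 + |b| := le_add_of_nonneg_left zero_le_one

variable (μ) in
/-- The distance to `0` in `L⁰`, written as a (non-homogeneous) group norm. -/
def N0 [SFinite μ] (f : L0 μ) : ℝ := ∫ x, min |f x| 1 ∂(μ.toFinite)

variable [SFinite μ]

lemma ae_fin {p : X → Prop} (h : ∀ᵐ x ∂μ, p x) : ∀ᵐ x ∂μ.toFinite, p x := by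
  rw [ae_toFinite]; exact h

lemma dL0_zero (f : L0 μ) : dL0 μ f 0 = N0 μ f := by
  apply integral_congr_ae
  filter_upwards [ae_fin (AEEqFun.coeFn_zero (μ := μ) (β := ℝ))] with x hx
  simp [hx]

lemma aesm_fin (f : L0 μ) : AEStronglyMeasurable f μ.toFinite :=
  f.aestronglyMeasurable.mono_ac (toFinite_absolutelyContinuous μ)

lemma integrable_trunc (f : L0 μ) : Integrable (fun x => min |f x| 1) μ.toFinite := by
  refine Integrable.of_bound (C := 1) ?_ ?_
  · exact (continuous_abs.min continuous_const).comp_aestronglyMeasurable (aesm_fin f)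
  · filter_upwards with x
    rw [Real.norm_of_nonneg (by positivity)]
    exact min_le_right _ _

lemma N0_nonneg (f : L0 μ) : 0 ≤ N0 μ f := integral_nonneg fun x => by positivity

lemma N0_mono {f g : L0 μ} (hf : 0 ≤ f) (h : f ≤ g) : N0 μ f ≤ N0 μ g := by
  apply integral_mono_ae (integrable_trunc f) (integrable_trunc g)
  rw [← AEEqFun.coeFn_le] at hf h
  filter_upwards [ae_fin hf, ae_fin h, ae_fin (AEEqFun.coeFn_zero (μ := μ) (β := ℝ))]
    with x h1 h2 h3
  rw [h3, Pi.zero_apply] at h1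
  exact min_le_min_right _ (abs_le_abs_of_nonneg h1 h2)

lemma N0_add_le (f g : L0 μ) : N0 μ (f + g) ≤ N0 μ f + N0 μ g := by
  unfold N0
  rw [← integral_add (integrable_trunc f) (integrable_trunc g)]
  apply integral_mono_ae (integrable_trunc _) ((integrable_trunc f).add (integrable_trunc g))
  filter_upwards [ae_fin (AEEqFun.coeFn_add f g)] with x h1
  rw [h1, Pi.add_apply]
  have := abs_add_le (f x) (g x)
  have h2 := abs_nonneg (f x)
  have h3 := abs_nonneg (g x)
  simp only [min_def, Pi.add_apply]
  split_ifs <;> linarith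

lemma N0_zero : N0 μ (0 : L0 μ) = 0 := by
  unfold N0
  rw [integral_eq_zero_of_ae]
  filter_upwards [ae_fin (AEEqFun.coeFn_zero (μ := μ) (β := ℝ))] with x hx
  simp [hx]

lemma N0_sum_le {ι : Type*} (F : Finset ι) (f : ι → L0 μ) :
    N0 μ (∑ i ∈ F, f i) ≤ ∑ i ∈ F, N0 μ (f i) :=
  Finset.le_sum_of_subadditive (N0 μ) N0_zero.le N0_add_le F f

lemma N0_eq_zero {f : L0 μ} (h : N0 μ f = 0) : f = 0 := by
  unfold N0 at h
  rw [integral_eq_zero_iff_of_nonneg (fun x => by positivity) (integrable_trunc f)] at h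
  apply AEEqFun.ext
  rw [Filter.EventuallyEq, ae_toFinite] at h
  filter_upwards [h, AEEqFun.coeFn_zero (μ := μ) (β := ℝ)] with x h1 h2
  rw [h2]
  simp only [Pi.zero_apply] at h1 ⊢
  rcases min_choice |f x| 1 with h3 | h3 <;> rw [h3] at h1
  · simpa using h1
  · norm_num at h1

/-- Inequalities in `L⁰` pass to limits in measure. -/
lemma le_of_approx {f g : L0 μ} (h : ∀ ε : ℝ, 0 < ε → ∃ r : L0 μ, f ≤ g + r ∧ N0 μ r < ε) :
    f ≤ g := by
  have h0 : N0 μ ((f - g) ⊔ 0) = 0 := by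
    refine le_antisymm (le_of_forall_pos_lt_add fun ε hε => ?_) (N0_nonneg _)
    obtain ⟨r, hr, hN⟩ := h ε hε
    rw [zero_add]
    refine lt_of_le_of_lt ?_ hN
    apply integral_mono_ae (integrable_trunc _) (integrable_trunc _)
    rw [← AEEqFun.coeFn_le] at hr
    filter_upwards [ae_fin hr, ae_fin (AEEqFun.coeFn_sup (f - g) 0),
      ae_fin (AEEqFun.coeFn_sub f g), ae_fin (AEEqFun.coeFn_add g r),
      ae_fin (AEEqFun.coeFn_zero (μ := μ) (β := ℝ))] with x h1 h2 h3 h4 h5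
    rw [h4, Pi.add_apply] at h1
    rw [h2, h3, h5]
    simp only [Pi.sub_apply, Pi.zero_apply]
    apply min_le_min_right
    rw [abs_of_nonneg (le_max_right _ _)]
    exact max_le (by linarith [le_abs_self (r x)]) (abs_nonneg _)
  have h1 := N0_eq_zero h0
  have h2 : f - g ≤ 0 := h1 ▸ le_sup_left
  exact sub_nonpos.mp h2

/-- Multiplication by a fixed `g` is continuous at `0`: outside a set of small measure `g` is
bounded by a constant `K`, where `min (g s) 1 ≤ K min s 1`. -/
lemma N0_mul_small (g : L0 μ) {ε : ℝ} (hε : 0 < ε) :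
    ∃ δ : ℝ, 0 < δ ∧ ∀ s : L0 μ, N0 μ s < δ → N0 μ (g * s) < ε := by
  -- the tails `{K < |g|}` have measure tending to `0`
  obtain ⟨K, hK1, hK⟩ : ∃ K : ℕ, 1 ≤ K ∧ μ.toFinite.real {x | (K : ℝ) < |g x|} < ε / 2 := by
    have hanti : Antitone fun K : ℕ => {x | (K : ℝ) < |g x|} := by
      intro a b hab x hx
      have : (a : ℝ) ≤ b := by exact_mod_cast hab
      exact lt_of_le_of_lt this hx
    have hmeas : ∀ K : ℕ, NullMeasurableSet {x | (K : ℝ) < |g x|} μ.toFinite := fun K =>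
      nullMeasurableSet_lt aemeasurable_const (aesm_fin g).aemeasurable.abs
    have ht := tendsto_measure_iInter_atTop hmeas hanti ⟨0, measure_ne_top _ _⟩
    have hempty : (⋂ K : ℕ, {x | (K : ℝ) < |g x|}) = ∅ := by
      ext x
      simp only [mem_iInter, mem_ofPred_eq, mem_empty_iff_false, iff_false, not_forall, not_lt]
      exact exists_nat_ge _
    rw [hempty, measure_empty] at ht
    have ht' := (ENNReal.tendsto_toReal ENNReal.zero_ne_top).comp ht
    have hev := ht'.eventually_lt_const (u := ε / 2) (by simpa using hε)
    obtain ⟨K, h1, h2⟩ := (hev.and (eventually_ge_atTop 1)).exists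
    exact ⟨K, h2, h1⟩
  have hKpos : (0 : ℝ) < K := by exact_mod_cast hK1
  refine ⟨ε / 2 / K, by positivity, fun s hs => ?_⟩
  have hms : NullMeasurableSet {x | (K : ℝ) < |g x|} μ.toFinite :=
    nullMeasurableSet_lt aemeasurable_const (aesm_fin g).aemeasurable.abs
  have hind : Integrable ({x | (K : ℝ) < |g x|}.indicator fun _ => (1 : ℝ)) μ.toFinite :=
    Integrable.of_bound (C := 1) (aestronglyMeasurable_const.indicator₀ hms) (by
      filter_upwards with x
      by_cases hx : x ∈ {x | (K : ℝ) < |g x|} <;> simp [hx])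
  have hle : N0 μ (g * s) ≤ K * N0 μ s + μ.toFinite.real {x | (K : ℝ) < |g x|} := by
    have e1 : μ.toFinite.real {x | (K : ℝ) < |g x|}
        = ∫ x, ({x | (K : ℝ) < |g x|}.indicator fun _ => (1 : ℝ)) x ∂μ.toFinite := by
      rw [integral_indicator₀ hms]; simp
    unfold N0
    rw [e1, ← integral_const_mul, ← integral_add ((integrable_trunc s).const_mul _) hind]
    apply integral_mono_ae (integrable_trunc _) (((integrable_trunc s).const_mul _).add hind)
    filter_upwards [ae_fin (AEEqFun.coeFn_mul g s)] with x hx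
    rw [hx, Pi.mul_apply, abs_mul]
    by_cases hg : (K : ℝ) < |g x|
    · have : (0 : ℝ) ≤ K * min |s x| 1 := by positivity
      have h1 : x ∈ {x | (K : ℝ) < |g x|} := hg
      simp only [Pi.add_apply, indicator_of_mem h1]
      linarith [min_le_right (|g x| * |s x|) 1]
    · have h1 : x ∉ {x | (K : ℝ) < |g x|} := hg
      simp only [Pi.add_apply, indicator_of_notMem h1, add_zero]
      push Not at hg
      have hK1' : (1 : ℝ) ≤ K := by exact_mod_cast hK1
      rw [mul_min_of_nonneg _ _ hKpos.le]
      exact min_le_min (mul_le_mul_of_nonneg_right hg (abs_nonneg _)) (by simpa using hK1')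
  have : K * N0 μ s < ε / 2 := by
    rw [lt_div_iff₀ hKpos] at hs
    linarith
  linarith

/-- A family of nonnegative elements of `L⁰` whose finite sums are bounded by `1` is summable
in the metric sense. -/
lemma summable_N0 {ι : Type*} {f : ι → L0 μ} (hf : ∀ i, 0 ≤ f i)
    (h : ∀ F : Finset ι, ∑ i ∈ F, f i ≤ 1) : Summable fun i => N0 μ (f i) := by
  refine summable_of_sum_le (c := μ.toFinite.real univ) (fun i => N0_nonneg _) fun F => ?_
  unfold N0
  rw [← integral_finsetSum _ fun i _ => integrable_trunc (f i)]
  have : μ.toFinite.real univ = ∫ _x, (1 : ℝ) ∂μ.toFinite := by simp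
  rw [this]
  apply integral_mono_ae (integrable_finsetSum _ fun i _ => integrable_trunc (f i))
    (integrable_const _)
  have h1 := h F
  rw [← AEEqFun.coeFn_le] at h1
  have h2 : ∀ᵐ x ∂μ, ∀ i ∈ F, 0 ≤ f i x := by
    rw [Finset.eventually_all]
    intro i _
    have := hf i
    rw [← AEEqFun.coeFn_le] at this
    filter_upwards [this, AEEqFun.coeFn_zero (μ := μ) (β := ℝ)] with x h3 h4
    simpa [h4] using h3
  filter_upwards [ae_fin h1, ae_fin h2, ae_fin (AEEqFun.coeFn_one (μ := μ) (β := ℝ)),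
    ae_fin (AEEqFun.coeFn_finsetSum F f)] with x h3 h4 h5 h6
  rw [h5, h6, Finset.sum_apply] at h3
  refine le_trans (Finset.sum_le_sum fun i hi => ?_) h3
  rw [abs_of_nonneg (h4 i hi)]
  exact min_le_left _ _

end L0calc

/-! ### Banach `L⁰`-modules as complete normed groups -/

section Modules

variable (μ : Measure X) [SFinite μ]
variable {M N : Type*} [AddCommGroup M] [Module (L0 μ) M] [BanachMod μ M]
  [AddCommGroup N] [Module (L0 μ) N] [BanachMod μ N]

lemma pn_nonneg' (v : M) : 0 ≤ pn μ v := BanachMod.pn_nonneg v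

lemma pn_eq_zero' {v : M} (h : pn μ v = 0) : v = 0 := (BanachMod.pn_eq_zero v).1 h

lemma pn_zero' : pn μ (0 : M) = 0 := (BanachMod.pn_eq_zero 0).2 rfl

lemma pn_add_le' (v w : M) : pn μ (v + w) ≤ pn μ v + pn μ w := BanachMod.pn_add_le v w

lemma pn_smul' (f : L0 μ) (v : M) : pn μ (f • v) = |f| * pn μ v := BanachMod.pn_smul f v

lemma pn_neg' (v : M) : pn μ (-v) = pn μ v := by
  have h := pn_smul' μ (-1 : L0 μ) v
  rwa [neg_one_smul, abs_neg, abs_of_nonneg_L0 zero_le_one, one_mul] at h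

lemma pn_sum_le {ι : Type*} (F : Finset ι) (u : ι → M) :
    pn μ (∑ i ∈ F, u i) ≤ ∑ i ∈ F, pn μ (u i) :=
  Finset.le_sum_of_subadditive (pn μ) (pn_zero' μ).le (pn_add_le' μ) F u

variable (M) in
/-- The distance of a Banach `L⁰`-module, repackaged as a group norm so that the metric
topology is available. -/
abbrev nrm : NormedAddCommGroup M := AddGroupNorm.toNormedAddCommGroup
  { toFun := fun v => N0 μ (pn μ v)
    map_zero' := by rw [pn_zero', N0_zero]
    add_le' := fun v w => (N0_mono (pn_nonneg' μ _) (pn_add_le' μ v w)).trans (N0_add_le _ _)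
    neg' := fun v => by rw [pn_neg']
    eq_zero_of_map_eq_zero' := fun v h => pn_eq_zero' μ (N0_eq_zero h) }

lemma norm_def (v : M) : letI := nrm μ M; ‖v‖ = N0 μ (pn μ v) := rfl

lemma norm_le_of_pn_le {v : M} {w : N} (h : pn μ v ≤ pn μ w) :
    letI := nrm μ M; letI := nrm μ N; ‖v‖ ≤ ‖w‖ :=
  N0_mono (pn_nonneg' μ _) h

variable (M) in
lemma nrm_complete : letI := nrm μ M; CompleteSpace M := by
  let := nrm μ M
  refine Metric.complete_of_cauchySeq_tendsto fun u hu => ?_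
  rw [Metric.cauchySeq_iff] at hu
  obtain ⟨v, hv⟩ := BanachMod.complete (μ := μ) u (fun ε hε => by
    obtain ⟨n, hn⟩ := hu ε hε
    refine ⟨n, fun k hk l hl => ?_⟩
    have h := hn k hk l hl
    rw [dist_eq_norm] at h
    rw [dL0_zero]
    exact h)
  refine ⟨v, ?_⟩
  rw [tendsto_iff_norm_sub_tendsto_zero]
  refine hv.congr fun n => ?_
  rw [dL0_zero]
  rfl

lemma continuous_of_bdd (T : M →+ N) (g : L0 μ) (h : ∀ v, pn μ (T v) ≤ g * pn μ v) :
    letI := nrm μ M; letI := nrm μ N; Continuous T := by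
  let := nrm μ M
  let := nrm μ N
  refine continuous_of_continuousAt_zero T ?_
  rw [Metric.continuousAt_iff]
  intro ε hε
  obtain ⟨δ, hδ, H⟩ := N0_mul_small g hε
  refine ⟨δ, hδ, fun v hv => ?_⟩
  rw [map_zero, dist_zero_right] at *
  exact lt_of_le_of_lt (N0_mono (pn_nonneg' μ _) (h v)) (H _ hv)

variable (M) in
lemma nrm_constSMul : letI := nrm μ M; ContinuousConstSMul (L0 μ) M := by
  let := nrm μ M
  refine ⟨fun f => ?_⟩
  exact continuous_of_bdd μ (DistribSMul.toAddMonoidHom M f) |f| fun v => (pn_smul' μ f v).le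

lemma pn_le_of_approx {p : M} {c : L0 μ}
    (h : letI := nrm μ M; ∀ ε : ℝ, 0 < ε → ∃ q : M, pn μ q ≤ c ∧ ‖p - q‖ < ε) : pn μ p ≤ c := by
  refine le_of_approx fun ε hε => ?_
  obtain ⟨q, hq, hN⟩ := h ε hε
  refine ⟨pn μ (p - q), ?_, hN⟩
  calc pn μ p = pn μ (q + (p - q)) := by rw [add_sub_cancel]
    _ ≤ pn μ q + pn μ (p - q) := pn_add_le' μ _ _
    _ ≤ c + pn μ (p - q) := by gcongr

/-- A family whose pointwise norms have order-bounded finite sums is summable: after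
multiplication by the weight `1 / (1 + |b|)` it is absolutely summable, and the weight is
invertible. -/
lemma summable_of_bdd {ι : Type*} (u : ι → M) (b : L0 μ)
    (h : ∀ F : Finset ι, ∑ i ∈ F, pn μ (u i) ≤ b) : letI := nrm μ M; Summable u := by
  let := nrm μ M
  have := nrm_complete μ M
  have := nrm_constSMul μ M
  have h1 : Summable fun i => wt b • u i := by
    refine Summable.of_norm ?_
    refine summable_N0 (f := fun i => pn μ (wt b • u i)) (fun i => pn_nonneg' μ _) fun F => ?_
    simp only [pn_smul', abs_of_nonneg_L0 (wt_nonneg b)]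
    rw [← Finset.mul_sum]
    exact (mul_le_mul_of_nonneg_left (h F) (wt_nonneg b)).trans (wt_mul_le b)
  have h2 := h1.const_smul (1 + |b|)
  simpa only [smul_smul, wt_mul, one_smul] using h2

/-- Extension by density of a linear map dominated by `e`. -/
lemma exists_extension {A P : Type*} [AddCommGroup A] [Module (L0 μ) A]
    [AddCommGroup P] [Module (L0 μ) P] [BanachMod μ P]
    (e : A →ₗ[L0 μ] P) (hd : letI := nrm μ P; DenseRange e)
    (T : A →ₗ[L0 μ] M) (hT : ∀ α, pn μ (T α) ≤ pn μ (e α)) :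
    letI := nrm μ P; letI := nrm μ M
    ∃ J : P →ₗ[L0 μ] M, Continuous J ∧ ∀ α, J (e α) = T α := by
  let := nrm μ P
  let := nrm μ M
  have := nrm_complete μ M
  have := nrm_constSMul μ M
  have := nrm_constSMul μ P
  let : UniformSpace A := UniformSpace.comap e inferInstance
  have : IsUniformAddGroup A := IsUniformAddGroup.comap e
  have hui : IsUniformInducing e := ⟨rfl⟩
  have hTc : Continuous T := by
    refine continuous_of_continuousAt_zero T ?_
    rw [ContinuousAt, map_zero, Metric.tendsto_nhds]
    intro ε hε
    have h0 : Tendsto e (nhds 0) (nhds 0) := by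
      have := hui.uniformContinuous.continuous.tendsto 0
      rwa [map_zero] at this
    rw [Metric.tendsto_nhds] at h0
    filter_upwards [h0 ε hε] with α hα
    rw [dist_zero_right] at hα ⊢
    exact lt_of_le_of_lt (norm_le_of_pn_le μ (hT α)) hα
  let eL : A →L[L0 μ] P := ⟨e, hui.uniformContinuous.continuous⟩
  let TL : A →L[L0 μ] M := ⟨T, hTc⟩
  refine ⟨(TL.extend eL).toLinearMap, (TL.extend eL).continuous, fun α => ?_⟩
  exact ContinuousLinearMap.extend_eq (e := eL) TL hd hui α

/-- For continuous linear `J i`, the bound `∑ i ∈ F, |J i p| ≤ |p|` passes from a dense set of `p`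
to the whole module. -/
lemma sum_pn_le_of_dense {A P I : Type*} [AddCommGroup P] [Module (L0 μ) P] [BanachMod μ P]
    (e : A → P) (hd : letI := nrm μ P; DenseRange e)
    (J : I → P →ₗ[L0 μ] M) (hJ : letI := nrm μ P; letI := nrm μ M; ∀ i, Continuous (J i))
    (F : Finset I) (h : ∀ α, ∑ i ∈ F, pn μ (J i (e α)) ≤ pn μ (e α)) (p : P) :
    ∑ i ∈ F, pn μ (J i p) ≤ pn μ p := by
  let := nrm μ P
  let := nrm μ M
  refine le_of_approx fun ε hε => ?_
  have hc : Continuous fun q : P => ∑ i ∈ F, ‖J i (p - q)‖ + ‖q - p‖ := by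
    have := hJ
    fun_prop
  have h0 : ∑ i ∈ F, ‖J i (p - p)‖ + ‖p - p‖ < ε := by simpa using hε
  obtain ⟨q, hq, α, rfl⟩ := hd.exists_mem_open (isOpen_lt hc continuous_const) ⟨p, h0⟩ |>.elim
    fun α hα => (⟨e α, hα, α, rfl⟩ : ∃ q, _ ∧ ∃ α, e α = q)
  refine ⟨∑ i ∈ F, pn μ (J i (p - e α)) + pn μ (e α - p), ?_, ?_⟩
  · have h1 : ∑ i ∈ F, pn μ (J i p)
        ≤ ∑ i ∈ F, pn μ (J i (e α)) + ∑ i ∈ F, pn μ (J i (p - e α)) := by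
      rw [← Finset.sum_add_distrib]
      refine Finset.sum_le_sum fun i _ => ?_
      calc pn μ (J i p) = pn μ (J i (e α) + J i (p - e α)) := by
            rw [← map_add, add_sub_cancel]
        _ ≤ _ := pn_add_le' μ _ _
    have h2 : pn μ (e α) ≤ pn μ p + pn μ (e α - p) := by
      calc pn μ (e α) = pn μ (p + (e α - p)) := by rw [add_sub_cancel]
        _ ≤ _ := pn_add_le' μ _ _
    calc _ ≤ _ := h1
      _ ≤ (pn μ p + pn μ (e α - p)) + ∑ i ∈ F, pn μ (J i (p - e α)) := by
        gcongr
        exact (h α).trans h2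
      _ = _ := by abel
  · refine lt_of_le_of_lt ((N0_add_le _ _).trans ?_) hq
    gcongr
    · exact N0_sum_le _ _
    · exact le_refl _

end Modules

/-! ### The coordinates of `𝔦` and the reconstruction formula -/

section CoordTensor

variable (μ : Measure X) {I V M : Type*} [AddCommGroup V] [Module (L0 μ) V]
  [AddCommGroup M] [Module (L0 μ) M] {c : I → V →ₗ[L0 μ] L0 μ}

/-- The coordinate functional `c i` tensored with the identity of `M`. -/
def coordTensor (c : I → V →ₗ[L0 μ] L0 μ) (i : I) : V ⊗[L0 μ] M →ₗ[L0 μ] M :=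
  TensorProduct.lift ((LinearMap.lsmul (L0 μ) M).comp (c i))

lemma coordTensor_tmul (i : I) (a : V) (v : M) :
    coordTensor μ c i (a ⊗ₜ[L0 μ] v) = c i a • v := by
  simp [coordTensor]

end CoordTensor

section Core

variable (μ : Measure X) [SFinite μ] {I : Type*}
variable {V M P : Type*} [AddCommGroup V] [Module (L0 μ) V] [BanachMod μ V]
  [AddCommGroup M] [Module (L0 μ) M] [BanachMod μ M]
  [AddCommGroup P] [Module (L0 μ) P] [BanachMod μ P]

open scoped Classical in
/-- The properties of the coordinates `c i` and of the canonical vectors `δ i` of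
`L⁰(𝕏;ℓ₁(I))` on which the theorem rests. -/
structure CoordSystem (c : I → V →ₗ[L0 μ] L0 μ) (δ : I → V) : Prop where
  pn_delta : ∀ i, pn μ (δ i) = 1
  coord_delta : ∀ i k, c k (δ i) = if i = k then 1 else 0
  sum_le : ∀ (F : Finset I) (a : V), ∑ i ∈ F, |c i a| ≤ pn μ a
  sep : ∀ a : V, (∀ k, c k a = 0) → a = 0

variable {c : I → V →ₗ[L0 μ] L0 μ} {δ : I → V}

lemma pn_smul_delta (hc : CoordSystem μ c δ) (f : L0 μ) (i : I) : pn μ (f • δ i) = |f| := by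
  rw [pn_smul', hc.pn_delta, mul_one]

/-- Every `a` is the sum of its coordinates: the series converges to some `s`, which has the same
coordinates as `a`. -/
lemma hasSum_coord (hc : CoordSystem μ c δ) (a : V) :
    letI := nrm μ V; HasSum (fun i => c i a • δ i) a := by
  classical
  let := nrm μ V
  have hs : Summable fun i => c i a • δ i := by
    refine summable_of_bdd μ _ (pn μ a) fun F => ?_
    simp only [pn_smul_delta μ hc]
    exact hc.sum_le F a
  obtain ⟨s, hs⟩ := hs
  suffices s = a by rwa [this] at hs
  rw [← sub_eq_zero]
  refine hc.sep _ fun k => ?_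
  -- the projection onto the `k`-th coordinate line is continuous
  let T : V →ₗ[L0 μ] V := (c k).smulRight (δ k)
  have hTc : Continuous T := continuous_of_bdd μ T.toAddMonoidHom 1 fun v => by
    change pn μ (c k v • δ k) ≤ _
    rw [pn_smul_delta μ hc, one_mul]
    simpa using hc.sum_le {k} v
  have h1 : HasSum (fun i => T (c i a • δ i)) (T s) := hs.map T hTc
  have h2 : HasSum (fun i => T (c i a • δ i)) (T a) := by
    convert hasSum_single k ?_ using 1
    · simp [T, hc.coord_delta]
    · intro i hi
      simp [T, hc.coord_delta, hi]
  have h3 : T (s - a) = 0 := by rw [map_sub, h1.unique h2, sub_self]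
  have h4 : pn μ (T (s - a)) = |c k (s - a)| := pn_smul_delta μ hc _ _
  rw [h3, pn_zero'] at h4
  exact le_antisymm (h4 ▸ le_abs_self _) (neg_nonpos.mp (h4 ▸ neg_le_abs _))

lemma pn_tmul_le {e : V ⊗[L0 μ] M →ₗ[L0 μ] P} (hP : IsPiTensor μ V M P e) (a : V) (v : M) :
    pn μ (e (a ⊗ₜ v)) ≤ pn μ a * pn μ v :=
  (hP.pn_emb _).1 ⟨1, fun _ => a, fun _ => v, by simp, by simp⟩

lemma denseRange_emb {e : V ⊗[L0 μ] M →ₗ[L0 μ] P} (hP : IsPiTensor μ V M P e) :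
    letI := nrm μ P; DenseRange e := by
  let := nrm μ P
  rw [Metric.denseRange_iff]
  intro p ε hε
  obtain ⟨α, hα⟩ := hP.dense p ε hε
  refine ⟨α, ?_⟩
  rw [dM, dL0_zero] at hα
  rwa [dist_comm, dist_eq_norm]

lemma sum_coordTensor_le (hc : CoordSystem μ c δ) {e : V ⊗[L0 μ] M →ₗ[L0 μ] P}
    (hP : IsPiTensor μ V M P e) (F : Finset I) (α : V ⊗[L0 μ] M) :
    ∑ i ∈ F, pn μ (coordTensor μ c i α) ≤ pn μ (e α) := by
  refine (hP.pn_emb α).2 ?_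
  rintro g ⟨n, v, w, rfl, rfl⟩
  calc ∑ i ∈ F, pn μ (coordTensor μ c i (∑ k, v k ⊗ₜ[L0 μ] w k))
      ≤ ∑ i ∈ F, ∑ k, |c i (v k)| * pn μ (w k) := by
        refine Finset.sum_le_sum fun i _ => ?_
        rw [map_sum]
        refine (pn_sum_le μ _ _).trans (le_of_eq ?_)
        simp only [coordTensor_tmul, pn_smul']
    _ = ∑ k, (∑ i ∈ F, |c i (v k)|) * pn μ (w k) := by
        rw [Finset.sum_comm]
        simp only [Finset.sum_mul]
    _ ≤ ∑ k, pn μ (v k) * pn μ (w k) :=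
        Finset.sum_le_sum fun k _ =>
          mul_le_mul_of_nonneg_right (hc.sum_le F (v k)) (pn_nonneg' μ _)

/-- The coordinates of the operator `𝔦`, together with the reconstruction
`p = ∑ i, δ i ⊗ 𝔦(p) i`. The reconstruction holds on elementary tensors by `hasSum_coord`, and
passes to limits since the partial sums are contractions in `p`. -/
lemma exists_coords (hc : CoordSystem μ c δ) {e : V ⊗[L0 μ] M →ₗ[L0 μ] P}
    (hP : IsPiTensor μ V M P e) :
    letI := nrm μ P; letI := nrm μ M
    ∃ J : I → P →ₗ[L0 μ] M, (∀ i, Continuous (J i)) ∧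
      (∀ a v i, J i (e (a ⊗ₜ[L0 μ] v)) = c i a • v) ∧
      (∀ (F : Finset I) p, ∑ i ∈ F, pn μ (J i p) ≤ pn μ p) ∧
      (∀ p, HasSum (fun i => e (δ i ⊗ₜ[L0 μ] J i p)) p) := by
  let := nrm μ P
  let := nrm μ M
  let := nrm μ V
  have hd := denseRange_emb μ hP
  have hex : ∀ i, ∃ J : P →ₗ[L0 μ] M, Continuous J ∧
      ∀ α, J (e α) = coordTensor μ c i α := fun i =>
    exists_extension μ e hd _ fun α => by simpa using sum_coordTensor_le μ hc hP {i} α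
  choose J hJc hJe using hex
  have hJle : ∀ (F : Finset I) p, ∑ i ∈ F, pn μ (J i p) ≤ pn μ p := fun F p =>
    sum_pn_le_of_dense μ e hd J hJc F (fun α => by
      simp only [hJe]
      exact sum_coordTensor_le μ hc hP F α) p
  refine ⟨J, hJc, fun a v i => by rw [hJe, coordTensor_tmul], hJle, fun p => ?_⟩
  have hdense : ∀ α, HasSum (fun i => e (δ i ⊗ₜ[L0 μ] J i (e α))) (e α) := by
    intro α
    induction α using TensorProduct.induction_on with
    | zero => simp
    | tmul a v =>
      let S : V →ₗ[L0 μ] P := e ∘ₗ (TensorProduct.mk (L0 μ) V M).flip v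
      have hS : Continuous S := continuous_of_bdd μ S.toAddMonoidHom (pn μ v) fun a => by
        rw [mul_comm]
        exact pn_tmul_le μ hP a v
      have h := (hasSum_coord μ hc a).map S hS
      change HasSum _ (S a)
      convert h using 1
      funext i
      simp [S, hJe, coordTensor_tmul, TensorProduct.tmul_smul]
    | add α β hα hβ =>
      convert hα.add hβ using 1
      · funext i
        simp [TensorProduct.tmul_add]
      · simp
  have hcontr : ∀ (F : Finset I) (q : P),
      ‖∑ i ∈ F, e (δ i ⊗ₜ[L0 μ] J i q)‖ ≤ ‖q‖ := by
    intro F q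
    refine norm_le_of_pn_le μ ((pn_sum_le μ _ _).trans (le_trans ?_ (hJle F q)))
    refine Finset.sum_le_sum fun i _ => ?_
    simpa [hc.pn_delta] using pn_tmul_le μ hP (δ i) (J i q)
  rw [HasSum, SummationFilter.unconditional_filter, Metric.tendsto_nhds]
  intro ε hε
  obtain ⟨α, hα⟩ := hd.exists_dist_lt p (show 0 < ε / 3 by positivity)
  have h1 := hdense α
  rw [HasSum, SummationFilter.unconditional_filter, Metric.tendsto_nhds] at h1
  filter_upwards [h1 (ε / 3) (by positivity)] with F hF
  have h2 : dist (∑ i ∈ F, e (δ i ⊗ₜ[L0 μ] J i p)) (∑ i ∈ F, e (δ i ⊗ₜ[L0 μ] J i (e α)))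
      ≤ dist p (e α) := by
    rw [dist_eq_norm, dist_eq_norm, ← Finset.sum_sub_distrib]
    simpa only [map_sub, TensorProduct.tmul_sub] using hcontr F (p - e α)
  have h3 := dist_triangle4 (∑ i ∈ F, e (δ i ⊗ₜ[L0 μ] J i p))
    (∑ i ∈ F, e (δ i ⊗ₜ[L0 μ] J i (e α))) (e α) p
  rw [dist_comm (e α) p] at h3
  linarith

end Core

/-! ### Coordinates on `L⁰(𝕏;ℓ₁(I))` -/

section Ell1

variable {μ : Measure X} {I : Type*}

/-- Elements of `L⁰(𝕏;ℓ₁(I))` are determined by their coordinates. For uncountable `I` this uses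
that the range is separable, so that only countably many coordinates are involved. -/
lemma eq_zero_of_coord (f : X →ₘ[μ] lp (fun _ : I => ℝ) 1)
    (h : ∀ k, ∀ᵐ x ∂μ, f x k = 0) : ∀ᵐ x ∂μ, f x = 0 := by
  obtain ⟨t, ⟨D, hD, htD⟩, hft⟩ := f.aestronglyMeasurable.isSeparable_ae_range
  have hsupp : ∀ d : lp (fun _ : I => ℝ) 1, (Function.support fun i => d i).Countable := by
    intro d
    have h1 := (lp.memℓp d).summable (by simp)
    refine h1.countable_support.mono fun i hi => ?_
    simpa using hi
  have hJ : (⋃ d ∈ D, Function.support fun i => d i).Countable := hD.biUnion fun d _ => hsupp d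
  have hae : ∀ᵐ x ∂μ, ∀ k ∈ ⋃ d ∈ D, Function.support fun i => d i, f x k = 0 :=
    (ae_ball_iff hJ).2 fun k _ => h k
  filter_upwards [hft, hae] with x hx1 hx2
  ext k
  by_cases hk : k ∈ ⋃ d ∈ D, Function.support fun i => d i
  · simpa using hx2 k hk
  · have hcl : IsClosed {d : lp (fun _ : I => ℝ) 1 | d k = 0} :=
      isClosed_eq (lp.evalCLM ℝ (fun _ : I => ℝ) 1 k).continuous continuous_const
    have hsub : D ⊆ {d : lp (fun _ : I => ℝ) 1 | d k = 0} := by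
      intro d hd
      by_contra hne
      exact hk (mem_biUnion hd hne)
    exact closure_minimal hsub hcl (htD hx1)

/-- A realization of `L⁰(𝕏;ℓ₁(I))` carries a coordinate system whose coordinate maps are
`coord`. -/
lemma exists_coordSystem [SFinite μ]
    {V : Type*} [AddCommGroup V] [Module (L0 μ) V] [BanachMod μ V]
    {ev : V → (X →ₘ[μ] lp (fun _ : I => ℝ) 1)}
    (hV : IsL0B μ (lp (fun _ : I => ℝ) 1) V ev) {coord : V → I → L0 μ}
    (hcoord : ∀ (a : V) (i : I), ∀ᵐ x ∂μ, (coord a i) x = (ev a) x i) :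
    ∃ (c : I → V →ₗ[L0 μ] L0 μ) (δ : I → V), (∀ i a, c i a = coord a i) ∧
      CoordSystem μ c δ := by
  classical
  let c : I → V →ₗ[L0 μ] L0 μ := fun i =>
    { toFun := fun a => coord a i
      map_add' := fun a b => by
        apply AEEqFun.ext
        filter_upwards [hcoord (a + b) i, hcoord a i, hcoord b i,
          AEEqFun.coeFn_add (coord a i) (coord b i), AEEqFun.coeFn_add (ev a) (ev b)]
          with x h1 h2 h3 h4 h5
        rw [h1, hV.add, h4, h5, Pi.add_apply, Pi.add_apply, h2, h3]
        rfl
      map_smul' := fun f a => by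
        apply AEEqFun.ext
        filter_upwards [hcoord (f • a) i, hcoord a i, hV.smul f a,
          AEEqFun.coeFn_mul f (coord a i)] with x h1 h2 h3 h4
        rw [h1, h3, RingHom.id_apply, smul_eq_mul, h4, Pi.mul_apply, h2]
        rfl }
  choose δ hδ using fun i : I => hV.bij.2
    (AEEqFun.const X (lp.single 1 i (1 : ℝ) : lp (fun _ : I => ℝ) 1))
  have hδx : ∀ i, ∀ᵐ x ∂μ, ev (δ i) x = lp.single 1 i (1 : ℝ) := fun i => by
    rw [hδ]
    filter_upwards [AEEqFun.coeFn_const (μ := μ) (α := X)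
      (lp.single 1 i (1 : ℝ) : lp (fun _ : I => ℝ) 1)] with x hx
    rw [hx]
    rfl
  refine ⟨c, δ, fun _ _ => rfl, ?_, ?_, ?_, ?_⟩
  · intro i
    apply AEEqFun.ext
    filter_upwards [hV.norm (δ i), hδx i, AEEqFun.coeFn_one (μ := μ) (β := ℝ)] with x h1 h2 h3
    rw [h1, h2, h3, lp.norm_single (by simp)]
    simp
  · intro i k
    apply AEEqFun.ext
    filter_upwards [hcoord (δ i) k, hδx i, AEEqFun.coeFn_one (μ := μ) (β := ℝ),
      AEEqFun.coeFn_zero (μ := μ) (β := ℝ)] with x h1 h2 h3 h4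
    change coord (δ i) k x = _
    rw [h1, h2]
    split_ifs with h
    · subst h
      simp [h3]
    · rw [h4, lp.single_apply_ne _ _ _ (Ne.symm h)]
      rfl
  · intro F a
    change ∑ i ∈ F, |coord a i| ≤ pn μ a
    rw [← AEEqFun.coeFn_le]
    have h2 : ∀ᵐ x ∂μ, ∀ i ∈ F, (|coord a i| : L0 μ) x = |ev a x i| := by
      rw [Finset.eventually_all]
      intro i _
      filter_upwards [abs_apply_ae (coord a i), hcoord a i] with x h3 h4
      rw [h3, h4]
    filter_upwards [hV.norm a, h2, AEEqFun.coeFn_finsetSum F fun i => |coord a i|]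
      with x h1 h3 h4
    rw [h4, h1, Finset.sum_apply, Finset.sum_congr rfl h3]
    simpa using lp.sum_rpow_le_norm_rpow (by simp) (ev a x) F
  · intro a ha
    apply pn_eq_zero' μ
    apply AEEqFun.ext
    have h0 : ∀ᵐ x ∂μ, ev a x = 0 := eq_zero_of_coord (ev a) fun k => by
      have hk : coord a k = 0 := ha k
      filter_upwards [hcoord a k, AEEqFun.coeFn_zero (μ := μ) (β := ℝ)] with x h1 h2
      rw [← h1, hk, h2]
      rfl
    filter_upwards [hV.norm a, h0, AEEqFun.coeFn_zero (μ := μ) (β := ℝ)] with x h1 h2 h3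
    rw [h1, h2, h3, norm_zero]
    rfl

end Ell1

/-- Let `𝕏` be a σ-finite measure space, `ℳ` a Banach `L⁰(𝕏)`-module and
`I` a nonempty index set. The unique linear continuous operator
`𝔦 : L⁰(𝕏;ℓ₁(I)) ⊗̂_π ℳ → ℓ₁(I,ℳ)` with `𝔦(a ⊗ v) = (a(·)_i · v)_{i ∈ I}` is an isomorphism
of Banach `L⁰(𝕏)`-modules. Here `V` realizes `L⁰(𝕏;ℓ₁(I))` (with coordinates `coord`), and
`P` realizes the projective tensor product `V ⊗̂_π ℳ`. -/
theorem projective_tensor_with_L0_l1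
    (μ : Measure X) [SigmaFinite μ] {I : Type*} [Nonempty I]
    (V : Type*) [AddCommGroup V] [Module (L0 μ) V] [BanachMod μ V]
    (M : Type*) [AddCommGroup M] [Module (L0 μ) M] [BanachMod μ M]
    (P : Type*) [AddCommGroup P] [Module (L0 μ) P] [BanachMod μ P]
    (ev : V → (X →ₘ[μ] lp (fun _ : I => ℝ) 1))
    (hV : IsL0B μ (lp (fun _ : I => ℝ) 1) V ev)
    (coord : V → I → L0 μ)
    (hcoord : ∀ (a : V) (i : I), ∀ᵐ x ∂μ, (coord a i) x = (ev a) x i)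
    (e : V ⊗[L0 μ] M →ₗ[L0 μ] P) (hP : IsPiTensor μ V M P e) :
    ∃ j : P → I → M,
      -- `𝔦` sends `a ⊗ v` to `(a(·)_i • v)_{i ∈ I}`
      ((∀ (a : V) (v : M) (i : I), j (e (a ⊗ₜ[L0 μ] v)) i = coord a i • v)
      -- `𝔦` is `L⁰(𝕏)`-linear
        ∧ (∀ p q : P, j (p + q) = j p + j q)
        ∧ (∀ (f : L0 μ) (p : P), j (f • p) = fun i => f • j p i)
      -- `𝔦` takes values in `ℓ₁(I, ℳ)` and preserves the pointwise norm
        ∧ (∀ p : P, Meml1 μ (j p))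
        ∧ (∀ p : P, IsLUB (l1PartialSums μ (j p)) (pn μ p))
      -- `𝔦` is bijective onto `ℓ₁(I, ℳ)`
        ∧ Function.Injective j
        ∧ (∀ g : I → M, Meml1 μ g → ∃ p : P, j p = g))
      -- uniqueness among linear continuous operators with the same elementary action
      ∧ (∀ j' : P → I → M,
          ((∀ (a : V) (v : M) (i : I), j' (e (a ⊗ₜ[L0 μ] v)) i = coord a i • v)
            ∧ (∀ p q : P, j' (p + q) = j' p + j' q)
            ∧ (∀ (f : L0 μ) (p : P), j' (f • p) = fun i => f • j' p i)
            ∧ (∀ p : P, Meml1 μ (j' p))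
            ∧ (∃ g : L0 μ, 0 ≤ g ∧ ∀ (p : P) (b : L0 μ),
                IsLUB (l1PartialSums μ (j' p)) b → b ≤ g * pn μ p)) →
          j' = j) := by
  classical
  obtain ⟨c, δ, hcc, hc⟩ := exists_coordSystem hV hcoord
  let := nrm μ P
  let := nrm μ M
  obtain ⟨J, hJc, hJe, hJle, hJsum⟩ := exists_coords μ hc hP
  have hd := denseRange_emb μ hP
  have hpnδ : ∀ i (v : M), pn μ (e (δ i ⊗ₜ[L0 μ] v)) ≤ pn μ v := fun i v => by
    simpa [hc.pn_delta] using pn_tmul_le μ hP (δ i) v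
  have hlub : ∀ p : P, IsLUB (l1PartialSums μ fun i => J i p) (pn μ p) := by
    intro p
    refine ⟨?_, fun b hb => pn_le_of_approx μ fun ε hε => ?_⟩
    · rintro g ⟨F, rfl⟩
      exact hJle F p
    · have h1 := hJsum p
      rw [HasSum, SummationFilter.unconditional_filter, Metric.tendsto_nhds] at h1
      obtain ⟨F, hF⟩ := (h1 ε hε).exists
      refine ⟨∑ i ∈ F, e (δ i ⊗ₜ[L0 μ] J i p), ?_, ?_⟩
      · exact ((pn_sum_le μ _ _).trans (Finset.sum_le_sum fun i _ => hpnδ i _)).trans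
          (hb ⟨F, rfl⟩)
      · rwa [dist_comm, dist_eq_norm] at hF
  refine ⟨fun p i => J i p, ⟨?_, ?_, ?_, ?_, ?_, ?_, ?_⟩, ?_⟩
  · intro a v i
    exact (hJe a v i).trans (by rw [hcc])
  · intro p q
    funext i
    simp
  · intro f p
    funext i
    simp
  · exact fun p => ⟨_, hlub p⟩
  · exact hlub
  · intro p q hpq
    have h1 := hJsum p
    have h2 : ∀ i, J i p = J i q := fun i => congrFun hpq i
    simp only [h2] at h1
    exact h1.unique (hJsum q)
  · rintro g ⟨b, hb⟩
    obtain ⟨p, hp⟩ := summable_of_bdd μ (fun i => e (δ i ⊗ₜ[L0 μ] g i)) b fun F =>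
      (Finset.sum_le_sum fun i _ => hpnδ i _).trans (hb.1 ⟨F, rfl⟩)
    refine ⟨p, funext fun k => ?_⟩
    have h1 := hp.map (J k) (hJc k)
    refine h1.unique ?_
    convert hasSum_single k ?_ using 1
    · simp [hJe, hc.coord_delta]
    · intro i hi
      simp [hJe, hc.coord_delta, hi]
  · rintro j' ⟨h1, h2, h3, h4, g, -, hg⟩
    funext p i
    let T : P →ₗ[L0 μ] M :=
      { toFun := fun p => j' p i
        map_add' := fun p q => by rw [h2]; rfl
        map_smul' := fun f p => by rw [h3]; rfl }
    have hT : Continuous T := continuous_of_bdd μ T.toAddMonoidHom g fun q => by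
      obtain ⟨b, hb⟩ := h4 q
      refine le_trans (hb.1 ⟨{i}, ?_⟩) (hg q b hb)
      rw [Finset.sum_singleton]
      rfl
    have hTe : ∀ α, T (e α) = J i (e α) := by
      intro α
      induction α using TensorProduct.induction_on with
      | zero => simp
      | tmul a v => rw [hJe, hcc]; exact h1 a v i
      | add α β hα hβ => rw [map_add, map_add, map_add, hα, hβ]
    exact congrFun (hd.equalizer hT (hJc i) (funext hTe)) p

end Paper
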